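/- For a nonnegative integer ℓ, nonnegative integer n, and complex numbers q, x with no vanishing denominators: sum over k from 0 to n of (q^{-3n};q^3)_k * (x;q)_k (q^{2-ℓ}/x;q)_k / ((q;q)_k (-q;q)_k (q^{3/2};q)_k (-q^{3/2-ℓ};q)_k (q^{-1-3n};q)_k) * q^k equals [(xq^{-1};q)_ℓ (-xq^{-1/2};q)_ℓ / ((x^2 q^{-1};q)_ℓ (-q^{-1/2};q)_ℓ)] times the sum over i from 0 to ℓ of (-1)^i q^{(ℓ - 1/2)i} * (1 - x^2 q^{2i-2})/(1 - x^2 q^{-2}) * ((q^{-ℓ};q)_i (x;q)_i (x^2 q^{-2};q)_i)/((q;q)_i (xq^{-1};q)_i (x^2 q^{ℓ-1};q)_i) * ((q^{2+i}x; q^3)_n (q^{4-i}/x; q^3)_n)/((q^2;q^3)_n (q^4;q^3)_n). (Extension of the second q-Gosper identity with an extra integer parameter.) -/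

import Mathlib

/-- q-Pochhammer symbol `(a; q)_k`. -/
noncomputable def qpoch (a q : ℂ) (k : ℕ) : ℂ := ∏ j ∈ Finset.range k, (1 - a * q ^ j)

/-!
Rogers' terminating very-well-poised ₆φ₅ sum expands the shifted quotient
`(x)_k (q^{2-ℓ}/x)_k / (-q^{3/2-ℓ})_k` as a combination, over `0 ≤ i ≤ ℓ`, of the unshifted ones
(`ℓ = 0`) at `q^i x`, with coefficients independent of `k`. After exchanging the two sums, each
inner sum over `k` is Gosper's second `q`-sum. Both summations follow by induction from a contiguous
relation whose defect telescopes.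

The intermediate factors of this argument may vanish at parameters which the theorem allows. They do
not vanish when `q^{1/2}` and `x` are multiplicatively independent; such pairs are dense in `ℂ × ℂ`,
and both sides of the identity are continuous wherever its own denominators are nonzero.
-/

section QPochhammer

variable {a q : ℂ} {j k m : ℕ}

theorem qpoch_zero (a q : ℂ) : qpoch a q 0 = 1 := Finset.prod_range_zero _

theorem qpoch_one (a q : ℂ) : qpoch a q 1 = 1 - a := by simp [qpoch]

theorem qpoch_succ (a q : ℂ) (k : ℕ) : qpoch a q (k + 1) = qpoch a q k * (1 - a * q ^ k) :=
  Finset.prod_range_succ _ _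

theorem qpoch_add (a q : ℂ) (m k : ℕ) :
    qpoch a q (m + k) = qpoch a q m * qpoch (a * q ^ m) q k := by
  simp only [qpoch, Finset.prod_range_add, pow_add, mul_assoc]

theorem qpoch_mul_qpoch_comm (a q : ℂ) (m k : ℕ) :
    qpoch a q m * qpoch (a * q ^ m) q k = qpoch a q k * qpoch (a * q ^ k) q m := by
  rw [← qpoch_add, ← qpoch_add, add_comm]

theorem one_sub_mul_qpoch (a q : ℂ) (k : ℕ) :
    (1 - a) * qpoch (a * q) q k = qpoch a q k * (1 - a * q ^ k) := by
  simpa only [qpoch_one, pow_one] using qpoch_mul_qpoch_comm a q 1 k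

theorem qpoch_ne_zero_iff : qpoch a q k ≠ 0 ↔ ∀ j < k, a * q ^ j ≠ 1 := by
  simp only [qpoch, Finset.prod_ne_zero_iff, Finset.mem_range, sub_ne_zero, @ne_comm ℂ 1]

theorem qpoch_ne_zero_of_le (h : qpoch a q k ≠ 0) (hm : m ≤ k) : qpoch a q m ≠ 0 :=
  qpoch_ne_zero_iff.2 fun j hj => qpoch_ne_zero_iff.1 h j (hj.trans_le hm)

theorem one_sub_mul_pow_ne_zero (h : qpoch a q k ≠ 0) (hj : j < k) : 1 - a * q ^ j ≠ 0 :=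
  sub_ne_zero.2 (qpoch_ne_zero_iff.1 h j hj).symm

theorem qpoch_mul_pow_ne_zero (h : qpoch a q (m + k) ≠ 0) : qpoch (a * q ^ m) q k ≠ 0 :=
  right_ne_zero_of_mul (qpoch_add a q m k ▸ h)

theorem qpoch_zpow_neg_eq_zero (hq : q ≠ 0) (hk : m < k) : qpoch (q ^ (-m : ℤ)) q k = 0 := by
  by_contra h
  exact qpoch_ne_zero_iff.1 h m hk (by rw [← zpow_natCast, zpow_neg_mul_zpow_self _ hq])

theorem qpoch_div_pow_mul_qpoch_mul_pow (a q : ℂ) (hq : q ≠ 0) (ha : a ≠ 0) (m k : ℕ) :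
    qpoch (a / q ^ m) q k * qpoch (q / (a * q ^ k)) q m * q ^ (m * k) =
      qpoch a q k * qpoch (q / a) q m := by
  induction m with
  | zero => simp [qpoch_zero]
  | succ m ih =>
    set b := a / q ^ (m + 1) with hb
    have hbq : b * q = a / q ^ m := by rw [hb]; field_simp; ring
    have hshift := one_sub_mul_qpoch b q k
    have hfactor : 1 - q / a * q ^ m = -(1 - b) / b := by rw [hb]; field_simp; ring
    have hfactor_shift : (1 - q / (a * q ^ k) * q ^ m) * q ^ k = -(1 - b * q ^ k) / b := by
      rw [hb]; field_simp; ring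
    rw [hbq] at hshift
    rw [qpoch_succ, qpoch_succ, add_mul, one_mul, pow_add, hfactor]
    linear_combination qpoch b q k * qpoch (q / (a * q ^ k)) q m * q ^ (m * k) * hfactor_shift
      + qpoch (q / (a * q ^ k)) q m * q ^ (m * k) / b * hshift - (1 - b) / b * ih

end QPochhammer

theorem sum_range_eq_mul_sum_range_of_telescoping {R : Type*} [CommRing R] {F F' G H : ℕ → R}
    {ρ : R} {N : ℕ} (hFG : ∀ i ≤ N + 1, F' i - ρ * F i = H i - G i)
    (hGH : ∀ i ≤ N, G (i + 1) = H i) (hG : G 0 = 0) (hH : H (N + 1) = 0) (hF : F (N + 1) = 0) :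
    ∑ i ∈ Finset.range (N + 2), F' i = ρ * ∑ i ∈ Finset.range (N + 1), F i := by
  have hsum : ∑ i ∈ Finset.range (N + 2), (F' i - ρ * F i) = 0 := by
    rw [Finset.sum_congr rfl fun i hi => hFG i (by grind), Finset.sum_sub_distrib,
      Finset.sum_range_succ, Finset.sum_range_succ' G,
      Finset.sum_congr rfl fun i hi => hGH i (by grind), hG, hH, sub_self]
  rw [Finset.sum_sub_distrib, ← Finset.mul_sum, Finset.sum_range_succ F, hF, add_zero] at hsum
  exact sub_eq_zero.1 hsum

theorem finite_setOf_zpow_eq {K : Type*} [Field K] {n : ℤ} (hn : n ≠ 0) (c : K) :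
    {z : K | z ^ n = c}.Finite := by
  classical
  have hroots {k : ℕ} (hk : k ≠ 0) (c : K) : {z : K | z ^ k = c}.Finite :=
    (Polynomial.nthRoots k c).toFinset.finite_toSet.subset fun z hz => by
      simpa [Polynomial.mem_nthRoots (Nat.pos_of_ne_zero hk)] using hz
  obtain ⟨k, rfl | rfl⟩ := n.eq_nat_or_neg
  · simpa using hroots (by simpa using hn) c
  · simpa [inv_eq_iff_eq_inv] using hroots (by simpa using hn) c⁻¹

/-- The pairs of nonzero complex numbers with no nontrivial multiplicative relation: the generic
parameters `(q^{1/2}, x)` at which no factor of the expansion vanishes. -/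
structure MultiplicativelyIndependent (s x : ℂ) : Prop where
  left_ne_zero : s ≠ 0
  right_ne_zero : x ≠ 0
  eq_zero_of_zpow_mul_zpow_eq_one : ∀ {m n : ℤ}, s ^ m * x ^ n = 1 → m = 0 ∧ n = 0

theorem dense_multiplicativelyIndependent :
    Dense {p : ℂ × ℂ | MultiplicativelyIndependent p.1 p.2} := by
  have hleft : Dense {s : ℂ | s ≠ 0 ∧ ∀ m : ℤ, m ≠ 0 → s ^ m ≠ 1} := by
    have hcount : (insert 0 (⋃ (m : ℤ) (_ : m ≠ 0), {s : ℂ | s ^ m = 1})).Countable :=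
      (Set.countable_iUnion fun m => Set.countable_iUnion fun hm =>
        (finite_setOf_zpow_eq hm 1).countable).insert 0
    refine (hcount.dense_compl ℂ).mono fun s hs => ?_
    simpa using hs
  have hright (s : ℂ) : Dense {x : ℂ | x ≠ 0 ∧ ∀ m n : ℤ, n ≠ 0 → x ^ n ≠ (s ^ m)⁻¹} := by
    have hcount :
        (insert 0 (⋃ (m : ℤ) (n : ℤ) (_ : n ≠ 0), {x : ℂ | x ^ n = (s ^ m)⁻¹})).Countable :=
      (Set.countable_iUnion fun m => Set.countable_iUnion fun n => Set.countable_iUnion fun hn =>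
        (finite_setOf_zpow_eq hn _).countable).insert 0
    refine (hcount.dense_compl ℂ).mono fun x hx => ?_
    simpa using hx
  have hfiber {s : ℂ} (x : ℂ) (hs : s ≠ 0 ∧ ∀ m : ℤ, m ≠ 0 → s ^ m ≠ 1) :
      (s, x) ∈ closure {p : ℂ × ℂ | MultiplicativelyIndependent p.1 p.2} := by
    refine map_mem_closure (f := (s, ·)) (by fun_prop) (hright s x)
      fun y hy => ⟨hs.1, hy.1, fun {m n} h => ?_⟩
    obtain rfl : n = 0 := by
      by_contra hn
      exact hy.2 m n hn (eq_inv_of_mul_eq_one_right h)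
    exact ⟨by_contra fun hm => hs.2 m hm (by simpa using h), rfl⟩
  intro ⟨s, x⟩
  exact closure_closure.subset
    (map_mem_closure (f := (·, x)) (by fun_prop) (hleft s) fun _ hs => hfiber x hs)

section RogersSum

/-- The `i`-th summand of Rogers' very-well-poised `₆φ₅` series with parameters `a, b, c, d` and
argument `aq / (bcd)`. The factors with `√a` and `-√a` are multiplied out, so that no square root of
`a` is chosen. -/
noncomputable def sixPhiFiveTerm (a b c d q : ℂ) (i : ℕ) : ℂ :=
  (1 - a * q ^ (2 * i)) / (1 - a) *
    ((qpoch a q i * qpoch b q i * qpoch c q i * qpoch d q i) /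
      (qpoch q q i * qpoch (a * q / b) q i * qpoch (a * q / c) q i * qpoch (a * q / d) q i)) *
    (a * q / (b * c * d)) ^ i

/-- The common factor of the contiguous `₆φ₅` summands with `d = e` and `d = eq`. The free parameter
is the argument `z` of the latter, so that `a = bcez`. -/
noncomputable def sixPhiFiveKernel (b c e z q : ℂ) (i : ℕ) : ℂ :=
  (qpoch (b * c * e * z) q i * qpoch b q i * qpoch c q i * qpoch e q i) /
    (qpoch q q i * qpoch (c * e * z * q) q i * qpoch (b * e * z * q) q i *
      qpoch (b * c * z) q i) * z ^ i

variable {b c e z q : ℂ}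

theorem sixPhiFiveKernel_succ_mul {i : ℕ} (hq : qpoch q q (i + 1) ≠ 0)
    (hb : qpoch (c * e * z * q) q (i + 1) ≠ 0) (hc : qpoch (b * e * z * q) q (i + 1) ≠ 0) :
    sixPhiFiveKernel b c e z q (i + 1) * ((1 - q ^ (i + 1)) * (1 - c * e * z * q ^ (i + 1)) *
        (1 - b * e * z * q ^ (i + 1))) =
      sixPhiFiveKernel b c e z q i * (z * (1 - b * c * e * z * q ^ i) * (1 - b * q ^ i) *
        (1 - c * q ^ i) * (1 - e * q ^ i) / (1 - b * c * z * q ^ i)) := by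
  have hfac (x : ℂ) : x * q ^ (i + 1) = x * q * q ^ i := by ring
  have hq' := one_sub_mul_pow_ne_zero hq i.lt_succ_self
  have hb' := one_sub_mul_pow_ne_zero hb i.lt_succ_self
  have hc' := one_sub_mul_pow_ne_zero hc i.lt_succ_self
  have hratio : sixPhiFiveKernel b c e z q (i + 1) = sixPhiFiveKernel b c e z q i *
      (z * (1 - b * c * e * z * q ^ i) * (1 - b * q ^ i) * (1 - c * q ^ i) * (1 - e * q ^ i) /
        ((1 - q * q ^ i) * (1 - c * e * z * q * q ^ i) * (1 - b * e * z * q * q ^ i) *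
          (1 - b * c * z * q ^ i))) := by
    simp only [sixPhiFiveKernel, qpoch_succ, pow_succ z, div_eq_mul_inv, mul_inv]
    ac_rfl
  rw [hratio, hfac, hfac, pow_succ' q, mul_assoc, div_mul_eq_div_div_swap, div_mul_cancel₀]
  exact mul_ne_zero (mul_ne_zero hq' hb') hc'

theorem sixPhiFiveTerm_mul_eq (hb : b ≠ 0) (hc : c ≠ 0) (he : e ≠ 0) (hq : q ≠ 0)
    (he1 : 1 - e ≠ 0) (i : ℕ) :
    sixPhiFiveTerm (b * c * e * z) b c (e * q) q i =
      (1 - b * c * e * z * q ^ (2 * i)) / (1 - b * c * e * z) *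
      sixPhiFiveKernel b c e z q i * ((1 - e * q ^ i) / (1 - e)) := by
  have h : qpoch (e * q) q i = qpoch e q i * (1 - e * q ^ i) / (1 - e) := by
    rw [eq_div_iff he1, ← one_sub_mul_qpoch, mul_comm]
  rw [sixPhiFiveTerm, sixPhiFiveKernel, h,
    show b * c * e * z * q / b = c * e * z * q by field_simp,
    show b * c * e * z * q / c = b * e * z * q by field_simp,
    show b * c * e * z * q / (e * q) = b * c * z by field_simp,
    show b * c * e * z * q / (b * c * (e * q)) = z by field_simp]
  ring

theorem sixPhiFiveTerm_eq (hb : b ≠ 0) (hc : c ≠ 0) (he : e ≠ 0) (hz : 1 - b * c * z ≠ 0)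
    (i : ℕ) :
    sixPhiFiveTerm (b * c * e * z) b c e q i =
      (1 - b * c * e * z * q ^ (2 * i)) / (1 - b * c * e * z) *
      sixPhiFiveKernel b c e z q i * (q ^ i * ((1 - b * c * z) / (1 - b * c * z * q ^ i))) := by
  have h : (qpoch (b * c * z * q) q i)⁻¹ =
      (qpoch (b * c * z) q i)⁻¹ * ((1 - b * c * z) / (1 - b * c * z * q ^ i)) := by
    have hshift := one_sub_mul_qpoch (b * c * z) q i
    rw [eq_div_of_mul_eq hz ((mul_comm _ _).trans hshift), inv_div, div_eq_mul_inv, mul_inv]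
    ring
  rw [sixPhiFiveTerm, sixPhiFiveKernel,
    show b * c * e * z * q / b = c * e * z * q by field_simp,
    show b * c * e * z * q / c = b * e * z * q by field_simp,
    show b * c * e * z * q / e = b * c * z * q by field_simp,
    show b * c * e * z * q / (b * c * e) = z * q by field_simp,
    div_eq_mul_inv _ (_ * qpoch (b * c * z * q) q i), mul_inv _ (qpoch (b * c * z * q) q i), h]
  ring

theorem sixPhiFive_certificate {K : Type*} [Field K] {b c e z t : K} (he : 1 - e ≠ 0)
    (hb : 1 - b * z ≠ 0) (hc : 1 - c * z ≠ 0) (ht : 1 - b * c * z * t ≠ 0) :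
    (1 - b * c * e * z * t ^ 2) * (t / (1 - b * c * z * t) -
      (1 - z) / ((1 - b * z) * (1 - c * z)) * ((1 - e * t) / (1 - e))) =
    (z * (1 - b * c * e * z * t) * (1 - b * t) * (1 - c * t) * (1 - e * t) / (1 - b * c * z * t) -
      (1 - t) * (1 - c * e * z * t) * (1 - b * e * z * t)) /
      ((1 - b * z) * (1 - c * z) * (1 - e)) := by
  field_simp
  ring

theorem sixPhiFiveTerm_sub_mul (hb : b ≠ 0) (hc : c ≠ 0) (he : e ≠ 0) (hq : q ≠ 0)
    (he1 : 1 - e ≠ 0) (hbz : 1 - b * z ≠ 0) (hcz : 1 - c * z ≠ 0) (hz : 1 - b * c * z ≠ 0) {i : ℕ}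
    (hi : 1 - b * c * z * q ^ i ≠ 0) :
    sixPhiFiveTerm (b * c * e * z) b c e q i - (1 - b * c * z) * (1 - z) /
        ((1 - b * z) * (1 - c * z)) * sixPhiFiveTerm (b * c * e * z) b c (e * q) q i =
      (1 - b * c * z) / ((1 - b * z) * (1 - c * z) * (1 - e) * (1 - b * c * e * z)) *
        (sixPhiFiveKernel b c e z q i * (z * (1 - b * c * e * z * q ^ i) * (1 - b * q ^ i) *
          (1 - c * q ^ i) * (1 - e * q ^ i) / (1 - b * c * z * q ^ i))) -
      (1 - b * c * z) / ((1 - b * z) * (1 - c * z) * (1 - e) * (1 - b * c * e * z)) *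
        (sixPhiFiveKernel b c e z q i * ((1 - q ^ i) * (1 - c * e * z * q ^ i) *
          (1 - b * e * z * q ^ i))) := by
  rw [sixPhiFiveTerm_eq hb hc he hz, sixPhiFiveTerm_mul_eq hb hc he hq he1, mul_comm 2 i, pow_mul]
  have hcert := sixPhiFive_certificate he1 hbz hcz hi
  simp only [div_eq_mul_inv, mul_inv] at hcert ⊢
  linear_combination (1 - b * c * z) * (1 - b * c * e * z)⁻¹ *
    sixPhiFiveKernel b c e z q i * hcert

theorem sum_sixPhiFiveTerm_eq_mul (hb : b ≠ 0) (hc : c ≠ 0) (hq : q ≠ 0) {l : ℕ}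
    (he : e * q = q ^ (-(l : ℤ))) (hqq : qpoch q q (l + 1) ≠ 0)
    (haq : qpoch (b * c * z) q (l + 2) ≠ 0) (hbz : qpoch (c * e * z * q) q (l + 1) ≠ 0)
    (hcz : qpoch (b * e * z * q) q (l + 1) ≠ 0) :
    ∑ i ∈ Finset.range (l + 2), sixPhiFiveTerm (b * c * e * z) b c e q i =
      (1 - b * c * z) * (1 - z) / ((1 - b * z) * (1 - c * z)) *
        ∑ i ∈ Finset.range (l + 1), sixPhiFiveTerm (b * c * e * z) b c (e * q) q i := by
  have hel : e * q ^ (l + 1) = 1 := by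
    rw [pow_succ', ← mul_assoc, he, ← zpow_natCast, zpow_neg_mul_zpow_self _ hq]
  have hlast (y : ℂ) : 1 - y * e * z * q * q ^ l = 1 - y * z := by
    rw [← mul_one (y * z), ← hel]; ring
  have he0 : e ≠ 0 := left_ne_zero_of_mul_eq_one hel
  have he1 : 1 - e ≠ 0 := fun h => one_sub_mul_pow_ne_zero hqq l.lt_succ_self <| by
    rw [← pow_succ', ← one_mul (q ^ _)]; nth_rw 2 [sub_eq_zero.1 h]; rw [hel, sub_self]
  have hbz1 := hlast b ▸ one_sub_mul_pow_ne_zero hcz l.lt_succ_self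
  have hcz1 := hlast c ▸ one_sub_mul_pow_ne_zero hbz l.lt_succ_self
  have hz1 : 1 - b * c * z ≠ 0 := by simpa using one_sub_mul_pow_ne_zero haq (by omega : 0 < l + 2)
  refine sum_range_eq_mul_sum_range_of_telescoping
    (fun i hi => sixPhiFiveTerm_sub_mul hb hc he0 hq he1 hbz1 hcz1 hz1
      (one_sub_mul_pow_ne_zero haq (by omega)))
    (fun i hi => ?_) ?_ ?_ ?_
  · rw [sixPhiFiveKernel_succ_mul (qpoch_ne_zero_of_le hqq (by omega))
      (qpoch_ne_zero_of_le hbz (by omega)) (qpoch_ne_zero_of_le hcz (by omega))]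
  · simp
  · simp [hel]
  · rw [he, sixPhiFiveTerm, qpoch_zpow_neg_eq_zero hq l.lt_succ_self]
    simp

theorem sum_sixPhiFiveTerm {a b c q : ℂ} (hb : b ≠ 0) (hc : c ≠ 0) (hq : q ≠ 0) {l : ℕ}
    (hqq : qpoch q q l ≠ 0) (ha : qpoch a q (2 * l + 1) ≠ 0) (hab : qpoch (a * q / b) q l ≠ 0)
    (hac : qpoch (a * q / c) q l ≠ 0) :
    ∑ i ∈ Finset.range (l + 1), sixPhiFiveTerm a b c (q ^ (-(l : ℤ))) q i =
      (qpoch (a * q) q l * qpoch (a * q / (b * c)) q l) /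
        (qpoch (a * q / b) q l * qpoch (a * q / c) q l) := by
  induction l with
  | zero =>
    rw [mul_zero, zero_add, qpoch_one] at ha
    simp [sixPhiFiveTerm, qpoch_zero, ha]
  | succ l ih =>
    set e := q ^ (-((l + 1 : ℕ) : ℤ))
    have he : e * q = q ^ (-(l : ℤ)) := by
      rw [← zpow_add_one₀ hq]; push_cast; ring_nf
    have he0 : e ≠ 0 := zpow_ne_zero _ hq
    obtain ⟨z, rfl⟩ : ∃ z, a = b * c * e * z := ⟨a / (b * c * e), by field_simp⟩
    have hel : e * q * q ^ l = 1 := by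
      rw [he, ← zpow_natCast, zpow_neg_mul_zpow_self _ hq]
    have haz : b * c * e * z * q ^ (l + 1) = b * c * z := by linear_combination b * c * z * hel
    have hab' : b * c * e * z * q / b = c * e * z * q := by field_simp
    have hac' : b * c * e * z * q / c = b * e * z * q := by field_simp
    have habc' : b * c * e * z * q / (b * c) = e * z * q := by field_simp
    rw [sum_sixPhiFiveTerm_eq_mul hb hc hq he hqq
        (haz ▸ qpoch_mul_pow_ne_zero (qpoch_ne_zero_of_le ha (by omega))) (hab' ▸ hab) (hac' ▸ hac),
      he, ih (qpoch_ne_zero_of_le hqq l.le_succ) (qpoch_ne_zero_of_le ha (by omega))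
        (qpoch_ne_zero_of_le hab l.le_succ) (qpoch_ne_zero_of_le hac l.le_succ),
      hab', hac', habc']
    have hlast (y : ℂ) : y * e * z * q * q ^ l = y * z := by linear_combination y * z * hel
    have hlast' : e * z * q * q ^ l = z := by linear_combination z * hel
    simp only [qpoch_succ, hlast, hlast', div_mul_div_comm]
    congr 1 <;> ring

end RogersSum

section GosperSum

/-- The `k`-th summand of Gosper's second `q`-sum with `r = q^{-3n}`, where `s` is a square root of
`q`. Gosper's sum has `y = q^2/x` and `w = -qs`; its extension divides both by `q^ℓ`. -/
noncomputable def gosperTerm (r q s x y w : ℂ) (k : ℕ) : ℂ :=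
  qpoch r (q ^ 3) k * (qpoch x q k * qpoch y q k) /
    (qpoch q q k * qpoch (-q) q k * qpoch (q * s) q k * qpoch w q k * qpoch (r / q) q k) * q ^ k

/-- The common factor of the contiguous summands `gosperTerm` with `r = pq` and `r = pq^4`, which
belong to consecutive values of `n`. -/
noncomputable def gosperKernel (p q s x : ℂ) (k : ℕ) : ℂ :=
  qpoch (p * q) (q ^ 3) k * (qpoch x q k * qpoch (q ^ 2 / x) q k) /
    (qpoch q q k * qpoch (-q) q k * qpoch (q * s) q k * qpoch (-(q * s)) q k *
      qpoch (p * q ^ 3) q k)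

variable {p q s x : ℂ} {k n : ℕ}

theorem gosperKernel_succ_mul (hs : s ^ 2 = q) (hq : qpoch q q (k + 1) ≠ 0)
    (hq' : qpoch (-q) q (k + 1) ≠ 0) (hqs : qpoch (q * s) q (k + 1) ≠ 0)
    (hqs' : qpoch (-(q * s)) q (k + 1) ≠ 0) (hp : qpoch (p * q ^ 3) q (k + 1) ≠ 0) :
    gosperKernel p q s x (k + 1) * ((1 - (q ^ (k + 1)) ^ 2) * (1 - q * (q ^ (k + 1)) ^ 2) *
        (1 - p * q ^ 2 * q ^ (k + 1))) =
      gosperKernel p q s x k * ((1 - p * q * (q ^ k) ^ 3) * (1 - x * q ^ k) *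
        (1 - q ^ 2 / x * q ^ k)) := by
  have hratio : gosperKernel p q s x (k + 1) = gosperKernel p q s x k *
      ((1 - p * q * (q ^ 3) ^ k) * (1 - x * q ^ k) * (1 - q ^ 2 / x * q ^ k) /
        ((1 - q * q ^ k) * (1 - -q * q ^ k) * ((1 - q * s * q ^ k) * (1 - -(q * s) * q ^ k)) *
          (1 - p * q ^ 3 * q ^ k))) := by
    simp only [gosperKernel, qpoch_succ, div_eq_mul_inv, mul_inv]
    ac_rfl
  have hden : (1 - (q ^ (k + 1)) ^ 2) * (1 - q * (q ^ (k + 1)) ^ 2) *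
        (1 - p * q ^ 2 * q ^ (k + 1)) =
      (1 - q * q ^ k) * (1 - -q * q ^ k) * ((1 - q * s * q ^ k) * (1 - -(q * s) * q ^ k)) *
        (1 - p * q ^ 3 * q ^ k) := by
    rw [← hs]; ring
  rw [hratio, hden, mul_assoc, div_mul_cancel₀, ← pow_mul, ← pow_mul, mul_comm 3]
  have hne {a : ℂ} (ha : qpoch a q (k + 1) ≠ 0) := one_sub_mul_pow_ne_zero ha k.lt_succ_self
  exact mul_ne_zero (mul_ne_zero (mul_ne_zero (hne hq) (hne hq'))
    (mul_ne_zero (hne hqs) (hne hqs'))) (hne hp)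

theorem gosperTerm_mul_pow_four (hq : q ≠ 0) (hp : 1 - p * q ≠ 0) (k : ℕ) :
    gosperTerm (p * q ^ 4) q s x (q ^ 2 / x) (-(q * s)) k =
      gosperKernel p q s x k * (q ^ k * ((1 - p * q * (q ^ k) ^ 3) / (1 - p * q))) := by
  have hshift : qpoch (p * q ^ 4) (q ^ 3) k =
      qpoch (p * q) (q ^ 3) k * (1 - p * q * (q ^ k) ^ 3) / (1 - p * q) := by
    have := one_sub_mul_qpoch (p * q) (q ^ 3) k
    rw [eq_div_iff hp, mul_comm, show p * q ^ 4 = p * q * q ^ 3 by ring, this, ← pow_mul,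
      ← pow_mul, mul_comm 3]
  rw [gosperTerm, gosperKernel, hshift, show p * q ^ 4 / q = p * q ^ 3 by field_simp]
  ring

theorem gosperTerm_mul (hq : q ≠ 0) (hp : qpoch (p * q ^ k) q 3 ≠ 0) :
    gosperTerm (p * q) q s x (q ^ 2 / x) (-(q * s)) k =
      gosperKernel p q s x k * (q ^ k * (qpoch (p * q ^ k) q 3 / qpoch p q 3)) := by
  have hshift : (qpoch p q k)⁻¹ =
      (qpoch (p * q ^ 3) q k)⁻¹ * (qpoch (p * q ^ k) q 3 / qpoch p q 3) := by
    rw [eq_div_of_mul_eq hp (qpoch_mul_qpoch_comm p q 3 k).symm, inv_div, div_eq_mul_inv, mul_inv]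
    ring
  rw [gosperTerm, gosperKernel, mul_div_cancel_right₀ p hq, div_eq_mul_inv, mul_inv, hshift]
  ring

theorem gosper_certificate {K : Type*} [Field K] {x : K} (hx : x ≠ 0) (p q t : K) :
    t * ((1 - p * t) * (1 - p * q * t) * (1 - p * q ^ 2 * t)) -
      (1 - p * q ^ 2 / x) * (1 - p * x) * (t * (1 - p * q * t ^ 3)) =
    p * ((1 - t ^ 2) * (1 - q * t ^ 2) * (1 - p * q ^ 2 * t)) -
      p * ((1 - p * q * t ^ 3) * (1 - x * t) * (1 - q ^ 2 / x * t)) := by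
  field_simp
  ring

theorem gosperTerm_sub_mul (hq : q ≠ 0) (hx : x ≠ 0) (hp : qpoch p q (k + 3) ≠ 0) :
    gosperTerm (p * q) q s x (q ^ 2 / x) (-(q * s)) k -
        (1 - p * q ^ 2 / x) * (1 - p * x) / ((1 - p) * (1 - p * q ^ 2)) *
          gosperTerm (p * q ^ 4) q s x (q ^ 2 / x) (-(q * s)) k =
      -p / qpoch p q 3 * (gosperKernel p q s x k * ((1 - p * q * (q ^ k) ^ 3) * (1 - x * q ^ k) *
        (1 - q ^ 2 / x * q ^ k))) -
      -p / qpoch p q 3 * (gosperKernel p q s x k * ((1 - (q ^ k) ^ 2) * (1 - q * (q ^ k) ^ 2) *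
        (1 - p * q ^ 2 * q ^ k))) := by
  have hthree (a : ℂ) : qpoch a q 3 = (1 - a) * (1 - a * q) * (1 - a * q ^ 2) := by
    simp [qpoch, Finset.prod_range_succ]
  have hpq : 1 - p * q ≠ 0 := by simpa using one_sub_mul_pow_ne_zero hp (j := 1) (by omega)
  have hcert := gosper_certificate hx p q (q ^ k)
  rw [gosperTerm_mul hq (qpoch_mul_pow_ne_zero hp), gosperTerm_mul_pow_four hq hpq, hthree,
    hthree, mul_right_comm p _ q, mul_right_comm p _ (q ^ 2)]
  simp only [div_eq_mul_inv, mul_inv] at hcert ⊢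
  linear_combination
    gosperKernel p q s x k * (1 - p)⁻¹ * (1 - p * q)⁻¹ * (1 - p * q ^ 2)⁻¹ * hcert

theorem sum_gosperTerm_eq_mul (hs : s ^ 2 = q) (hx : x ≠ 0)
    (hq : qpoch q q (3 * n + 4) ≠ 0) (hp : p * q ^ (3 * n + 4) = 1) :
    ∑ k ∈ Finset.range (n + 2), gosperTerm (p * q) q s x (q ^ 2 / x) (-(q * s)) k =
      (1 - p * q ^ 2 / x) * (1 - p * x) / ((1 - p) * (1 - p * q ^ 2)) *
        ∑ k ∈ Finset.range (n + 1), gosperTerm (p * q ^ 4) q s x (q ^ 2 / x) (-(q * s)) k := by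
  have hq0 : q ≠ 0 := by rintro rfl; simp at hp
  have hqj {j : ℕ} (hj : j ≠ 0) (h : j ≤ 3 * n + 4) : q ^ j ≠ 1 := by
    obtain ⟨i, rfl⟩ := Nat.exists_eq_succ_of_ne_zero hj
    exact pow_succ' q i ▸ qpoch_ne_zero_iff.1 hq i h
  have hpj {j : ℕ} (h : j < 3 * n + 4) : p * q ^ j ≠ 1 := fun hone => by
    rw [← pow_mul_pow_sub q h.le, ← mul_assoc, hone, one_mul] at hp
    exact hqj (by omega) (by omega) hp
  have hne {a : ℂ} {k m : ℕ} (hk : k ≤ n + 1) (hm : 2 * n + m ≤ 3 * n + 4) (hm0 : m ≠ 0)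
      (ha : a ^ 2 = q ^ m) : qpoch a q k ≠ 0 :=
    qpoch_ne_zero_iff.2 fun j hj h => hqj (j := 2 * j + m) (by omega) (by omega) <| by
      rw [pow_add, ← ha, mul_comm 2 j, pow_mul, ← mul_pow, mul_comm, h, one_pow]
  refine sum_range_eq_mul_sum_range_of_telescoping
    (fun i hi => gosperTerm_sub_mul hq0 hx
      (qpoch_ne_zero_iff.2 fun j hj => hpj (by omega)))
    (fun i hi => ?_) ?_ ?_ ?_
  · rw [gosperKernel_succ_mul hs (hne (by omega) (m := 2) (by omega) (by omega) rfl)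
      (hne (by omega) (m := 2) (by omega) (by omega) (by ring))
      (hne (by omega) (m := 3) (by omega) (by omega) (by rw [← hs]; ring))
      (hne (by omega) (m := 3) (by omega) (by omega) (by rw [← hs]; ring))
      (qpoch_ne_zero_iff.2 fun j hj => ?_)]
    rw [mul_assoc, ← pow_add]
    exact hpj (by omega)
  · simp
  · have hlast : p * q * (q ^ (n + 1)) ^ 3 = 1 := by rw [← hp]; ring
    rw [hlast]
    simp
  · have hlast : qpoch (p * q ^ 4) (q ^ 3) (n + 1) = 0 := by
      by_contra h
      exact qpoch_ne_zero_iff.1 h n n.lt_succ_self (by rw [← hp]; ring)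
    simp [gosperTerm, hlast]

theorem gosper_ratio_eq (hx : x ≠ 0) (hp : p * q ^ (3 * n + 4) = 1) :
    (1 - p * q ^ 2 / x) * (1 - p * x) / ((1 - p) * (1 - p * q ^ 2)) =
      ((1 - q ^ 2 * x * (q ^ 3) ^ n) * (1 - q ^ 4 / x * (q ^ 3) ^ n)) /
        ((1 - q ^ 2 * (q ^ 3) ^ n) * (1 - q ^ 4 * (q ^ 3) ^ n)) := by
  have hflip {y y' : ℂ} (h : y * y' = q ^ 4) : 1 - p * y = -(p * y) * (1 - y' * (q ^ 3) ^ n) := by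
    linear_combination -(p * (q ^ 3) ^ n * h) - hp
  have hp0 : p ≠ 0 := left_ne_zero_of_mul_eq_one hp
  have hq : q ≠ 0 := by rintro rfl; simp at hp
  have hone : 1 - p = -p * (1 - q ^ 4 * (q ^ 3) ^ n) := by
    simpa only [mul_one] using hflip (one_mul (q ^ 4))
  rw [mul_div_assoc p, hflip (show q ^ 2 / x * (q ^ 2 * x) = q ^ 4 by field_simp),
    hflip (show x * (q ^ 4 / x) = q ^ 4 by field_simp), hone,
    hflip (show q ^ 2 * q ^ 2 = q ^ 4 by ring),
    ← mul_div_mul_left _ ((1 - q ^ 2 * (q ^ 3) ^ n) * _)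
      (mul_ne_zero (pow_ne_zero 2 hp0) (pow_ne_zero 2 hq))]
  congr 1
  · field_simp
  · ring

theorem sum_gosperTerm (hs : s ^ 2 = q) (hq0 : q ≠ 0) (hx : x ≠ 0)
    (hq : qpoch q q (3 * n + 1) ≠ 0) :
    ∑ k ∈ Finset.range (n + 1),
        gosperTerm (q ^ (-(3 * n : ℤ))) q s x (q ^ 2 / x) (-(q * s)) k =
      (qpoch (q ^ 2 * x) (q ^ 3) n * qpoch (q ^ 4 / x) (q ^ 3) n) /
        (qpoch (q ^ 2) (q ^ 3) n * qpoch (q ^ 4) (q ^ 3) n) := by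
  induction n with
  | zero => simp [gosperTerm, qpoch_zero]
  | succ n ih =>
    set p := q ^ (-((3 * n + 4 : ℕ) : ℤ))
    have hp : p * q ^ (3 * n + 4) = 1 := by rw [← zpow_natCast, zpow_neg_mul_zpow_self _ hq0]
    have hpq : p * q = q ^ (-(3 * (n + 1 : ℕ) : ℤ)) := by
      rw [← zpow_add_one₀ hq0]; push_cast; ring_nf
    have hpq4 : p * q ^ 4 = q ^ (-(3 * n : ℤ)) := by
      rw [← zpow_natCast q 4, ← zpow_add₀ hq0]; push_cast; ring_nf
    rw [← hpq, sum_gosperTerm_eq_mul hs hx hq hp, hpq4,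
      ih (qpoch_ne_zero_of_le hq (by omega)), gosper_ratio_eq hx hp]
    simp only [qpoch_succ, div_mul_div_comm]
    congr 1 <;> ring

end GosperSum

section Expansion

/-- The coefficient of the `i`-th summand on the right-hand side of the extended identity, with `s`
in the role of `q^{1/2}`. -/
noncomputable def gosperExtensionCoeff (ℓ : ℕ) (q s x : ℂ) (i : ℕ) : ℂ :=
  (-1 : ℂ) ^ i * (q ^ (ℓ * i) / s ^ i) *
    ((1 - x ^ 2 * q ^ (2 * (i : ℤ) - 2)) / (1 - x ^ 2 / q ^ 2)) *
    (qpoch (q ^ (-(ℓ : ℤ))) q i * qpoch x q i * qpoch (x ^ 2 / q ^ 2) q i) /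
    (qpoch q q i * qpoch (x / q) q i * qpoch (x ^ 2 * q ^ ((ℓ : ℤ) - 1)) q i)

/-- The quotient of `q`-Pochhammer symbols of length `ℓ` in front of the sum on the right-hand side
of the extended identity, with `s` in the role of `q^{1/2}`. -/
noncomputable def gosperExtensionPrefactor (ℓ : ℕ) (q s x : ℂ) : ℂ :=
  (qpoch (x / q) q ℓ * qpoch (-(x / s)) q ℓ) / (qpoch (x ^ 2 / q) q ℓ * qpoch (-(1 / s)) q ℓ)

variable {a q s x : ℂ} {i k ℓ : ℕ}

theorem gosperExtensionCoeff_mul (hs : s ^ 2 = q) (hs0 : s ≠ 0) (hx : x ≠ 0)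
    (hxi : qpoch x q i ≠ 0) (hxq : qpoch (x / q) q i ≠ 0) (hxk : qpoch (x / (q * q ^ k)) q i ≠ 0)
    (hxs : qpoch (-(x / s)) q i ≠ 0) :
    gosperExtensionCoeff ℓ q s x i * (qpoch (x * q ^ i) q k * qpoch (q ^ 2 / x / q ^ i) q k) =
      qpoch x q k * qpoch (q ^ 2 / x) q k *
        sixPhiFiveTerm (x ^ 2 / q ^ 2) (x * q ^ k) (-(x / s)) (q ^ (-(ℓ : ℤ))) q i := by
  have hq : q ≠ 0 := hs ▸ pow_ne_zero 2 hs0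
  have hshift : qpoch (x * q ^ i) q k = qpoch x q k * qpoch (x * q ^ k) q i / qpoch x q i := by
    rw [eq_div_iff hxi, ← qpoch_mul_qpoch_comm, mul_comm]
  have hreflect : qpoch (q ^ 2 / x / q ^ i) q k =
      qpoch (q ^ 2 / x) q k * qpoch (x / q) q i /
        (qpoch (x / (q * q ^ k)) q i * (q ^ k) ^ i) := by
    have h := qpoch_div_pow_mul_qpoch_mul_pow (q ^ 2 / x) q hq (by positivity) i k
    rw [show q / (q ^ 2 / x * q ^ k) = x / (q * q ^ k) by field_simp,
      show q / (q ^ 2 / x) = x / q by field_simp, mul_comm i k, pow_mul, mul_assoc] at h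
    exact eq_div_of_mul_eq (mul_ne_zero hxk (pow_ne_zero _ (pow_ne_zero _ hq))) h
  have hb : x ^ 2 / q ^ 2 * q / (x * q ^ k) = x / (q * q ^ k) := by field_simp
  have hc : x ^ 2 / q ^ 2 * q / -(x / s) = -(x / s) := by rw [← hs]; field_simp
  have hd : x ^ 2 / q ^ 2 * q / q ^ (-(ℓ : ℤ)) = x ^ 2 * q ^ ((ℓ : ℤ) - 1) := by
    rw [zpow_neg, zpow_sub_one₀ hq]; field_simp
  have harg : x ^ 2 / q ^ 2 * q / (x * q ^ k * -(x / s) * q ^ (-(ℓ : ℤ))) =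
      -1 * (q ^ ℓ / s) / q ^ k := by
    rw [zpow_neg, zpow_natCast, ← hs]; field_simp
  have hlead : x ^ 2 * q ^ (2 * (i : ℤ) - 2) = x ^ 2 / q ^ 2 * q ^ (2 * i) := by
    rw [zpow_sub₀ hq]; norm_cast; ring
  rw [sixPhiFiveTerm, gosperExtensionCoeff, hshift, hreflect, hb, hc, hd, harg, hlead, div_pow,
    mul_pow, div_pow, ← pow_mul q ℓ]
  generalize (1 - x ^ 2 / q ^ 2 * q ^ (2 * i)) / _ = v
  generalize (-1) ^ i * (q ^ (ℓ * i) / s ^ i) = u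
  field_simp

theorem MultiplicativelyIndependent.qpoch_ne_zero {m n : ℤ} (h : MultiplicativelyIndependent s x)
    (hs : s ^ 2 = q) (hmn : 0 < m ∨ n ≠ 0) (ha : s ^ m * x ^ n = a) : qpoch a q k ≠ 0 :=
  qpoch_ne_zero_iff.2 fun j _ hj => by
    rw [← ha, mul_right_comm, ← hs, ← pow_mul, ← zpow_natCast, ← zpow_add₀ h.left_ne_zero] at hj
    have := h.eq_zero_of_zpow_mul_zpow_eq_one hj
    omega

theorem MultiplicativelyIndependent.qpoch_neg_ne_zero {m n : ℤ}
    (h : MultiplicativelyIndependent s x) (hs : s ^ 2 = q) (ha : -(s ^ m * x ^ n) = a) :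
    qpoch a q k ≠ 0 :=
  qpoch_ne_zero_iff.2 fun j _ hj => by
    rw [← ha, neg_mul, mul_right_comm, ← hs, ← pow_mul, ← zpow_natCast,
      ← zpow_add₀ h.left_ne_zero] at hj
    have hsq : s ^ (2 * (m + (2 * j : ℕ))) * x ^ (2 * n) = 1 := by
      rw [two_mul (m + _), two_mul n, zpow_add₀ h.left_ne_zero, zpow_add₀ h.right_ne_zero]
      linear_combination (1 - s ^ (m + (2 * j : ℕ)) * x ^ n) * hj
    obtain ⟨hm, hn⟩ := h.eq_zero_of_zpow_mul_zpow_eq_one hsq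
    rw [show m + (2 * j : ℕ) = 0 by omega, show n = 0 by omega] at hj
    norm_num at hj

theorem sum_gosperExtensionCoeff_mul (h : MultiplicativelyIndependent s x) (hs : s ^ 2 = q)
    (ℓ k : ℕ) :
    ∑ i ∈ Finset.range (ℓ + 1), gosperExtensionCoeff ℓ q s x i *
        (qpoch (x * q ^ i) q k * qpoch (q ^ 2 / x / q ^ i) q k) =
      qpoch x q k * qpoch (q ^ 2 / x) q k *
        ((qpoch (x ^ 2 / q) q ℓ * qpoch (-(1 / s) / q ^ k) q ℓ) /
          (qpoch (x / (q * q ^ k)) q ℓ * qpoch (-(x / s)) q ℓ)) := by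
  have hs0 := h.left_ne_zero
  have hx := h.right_ne_zero
  have hq : q ≠ 0 := hs ▸ pow_ne_zero 2 hs0
  have hxk (j : ℕ) : qpoch (x / (q * q ^ k)) q j ≠ 0 :=
    h.qpoch_ne_zero hs (m := -(2 * (k + 1) : ℕ)) (n := 1) (.inr one_ne_zero) <| by
      rw [zpow_neg, zpow_natCast, pow_mul, hs, ← pow_succ']; field_simp
  have hxs (j : ℕ) : qpoch (-(x / s)) q j ≠ 0 :=
    h.qpoch_neg_ne_zero hs (m := -1) (n := 1) (by field_simp)
  have hA : qpoch (x ^ 2 / q ^ 2) q (2 * ℓ + 1) ≠ 0 :=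
    h.qpoch_ne_zero hs (m := -4) (n := 2) (.inr two_ne_zero) (by rw [← hs]; field_simp)
  have hb : x ^ 2 / q ^ 2 * q / (x * q ^ k) = x / (q * q ^ k) := by field_simp
  have hc : x ^ 2 / q ^ 2 * q / -(x / s) = -(x / s) := by rw [← hs]; field_simp
  have hbc : x ^ 2 / q ^ 2 * q / (x * q ^ k * -(x / s)) = -(1 / s) / q ^ k := by
    rw [← hs]; field_simp
  have hsum := sum_sixPhiFiveTerm (mul_ne_zero hx (pow_ne_zero k hq))
    (neg_ne_zero.2 (div_ne_zero hx hs0)) hq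
    (h.qpoch_ne_zero hs (m := 2) (n := 0) (.inl two_pos) (by simp [hs])) hA (hb ▸ hxk ℓ)
    (by rw [hc]; exact hxs ℓ)
  rw [hb, hc, hbc, show x ^ 2 / q ^ 2 * q = x ^ 2 / q by field_simp] at hsum
  rw [← hsum, Finset.mul_sum]
  refine Finset.sum_congr rfl fun i _ => gosperExtensionCoeff_mul hs hs0 hx ?_ ?_ (hxk i) (hxs i)
  · exact h.qpoch_ne_zero hs (m := 0) (n := 1) (.inr one_ne_zero) (by simp)
  · exact h.qpoch_ne_zero hs (m := -2) (n := 1) (.inr one_ne_zero) (by rw [← hs]; field_simp)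

theorem qpoch_shifted_quotient_eq_sum (h : MultiplicativelyIndependent s x) (hs : s ^ 2 = q)
    (ℓ k : ℕ) :
    qpoch x q k * qpoch (q ^ 2 / x / q ^ ℓ) q k / qpoch (-(q * s) / q ^ ℓ) q k =
      gosperExtensionPrefactor ℓ q s x * (∑ i ∈ Finset.range (ℓ + 1),
        gosperExtensionCoeff ℓ q s x i *
          (qpoch (x * q ^ i) q k * qpoch (q ^ 2 / x / q ^ i) q k)) / qpoch (-(q * s)) q k := by
  have hs0 := h.left_ne_zero
  have hx := h.right_ne_zero
  have hq : q ≠ 0 := hs ▸ pow_ne_zero 2 hs0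
  have hnum := qpoch_div_pow_mul_qpoch_mul_pow (q ^ 2 / x) q hq (by positivity) ℓ k
  have hden := qpoch_div_pow_mul_qpoch_mul_pow (-(q * s)) q hq (by simp [hq, hs0]) ℓ k
  rw [show q / (q ^ 2 / x * q ^ k) = x / (q * q ^ k) by field_simp,
    show q / (q ^ 2 / x) = x / q by field_simp] at hnum
  rw [show q / (-(q * s) * q ^ k) = -(1 / s) / q ^ k by field_simp,
    show q / -(q * s) = -(1 / s) by field_simp] at hden
  have hxk : qpoch (x / (q * q ^ k)) q ℓ ≠ 0 :=
    h.qpoch_ne_zero hs (m := -(2 * (k + 1) : ℕ)) (n := 1) (.inr one_ne_zero) <| by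
      rw [zpow_neg, zpow_natCast, pow_mul, hs, ← pow_succ']; field_simp
  have hxs : qpoch (-(x / s)) q ℓ ≠ 0 :=
    h.qpoch_neg_ne_zero hs (m := -1) (n := 1) (by field_simp)
  have hx2 : qpoch (x ^ 2 / q) q ℓ ≠ 0 :=
    h.qpoch_ne_zero hs (m := -2) (n := 2) (.inr two_ne_zero) (by rw [← hs]; field_simp)
  have hs1 : qpoch (-(1 / s)) q ℓ ≠ 0 :=
    h.qpoch_neg_ne_zero hs (m := -1) (n := 0) (by field_simp)
  have hqs : qpoch (-(q * s)) q k ≠ 0 :=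
    h.qpoch_neg_ne_zero hs (m := 3) (n := 0) (by rw [← hs]; field_simp)
  have hqs' : qpoch (-(q * s) / q ^ ℓ) q k ≠ 0 := by
    refine h.qpoch_neg_ne_zero hs (m := 3 - (2 * ℓ : ℕ)) (n := 0) ?_
    rw [zpow_sub₀ hs0, zpow_natCast, pow_mul, hs, ← hs]; field_simp
  rw [sum_gosperExtensionCoeff_mul h hs, gosperExtensionPrefactor]
  generalize qpoch (-(q * s) / q ^ ℓ) q k = d at *
  generalize qpoch (-(1 / s) / q ^ k) q ℓ = v at *
  generalize qpoch (q ^ 2 / x / q ^ ℓ) q k = y at *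
  field_simp
  linear_combination qpoch x q k * (d * v * hnum - y * qpoch (x / (q * q ^ k)) q ℓ * hden)

theorem gosperTerm_shifted_eq_sum (h : MultiplicativelyIndependent s x) (hs : s ^ 2 = q) (r : ℂ)
    (ℓ k : ℕ) :
    gosperTerm r q s x (q ^ 2 / x / q ^ ℓ) (-(q * s) / q ^ ℓ) k =
      gosperExtensionPrefactor ℓ q s x * ∑ i ∈ Finset.range (ℓ + 1),
        gosperExtensionCoeff ℓ q s x i *
          gosperTerm r q s (x * q ^ i) (q ^ 2 / (x * q ^ i)) (-(q * s)) k := by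
  have hexpand := qpoch_shifted_quotient_eq_sum h hs ℓ k
  have hfactor (x y w : ℂ) : gosperTerm r q s x y w k = qpoch x q k * qpoch y q k / qpoch w q k *
      (qpoch r (q ^ 3) k * q ^ k /
        (qpoch q q k * qpoch (-q) q k * qpoch (q * s) q k * qpoch (r / q) q k)) := by
    rw [gosperTerm]
    ring
  rw [hfactor, hexpand, mul_div_assoc, mul_assoc, Finset.sum_div, Finset.sum_mul]
  refine congrArg _ (Finset.sum_congr rfl fun i _ => ?_)
  rw [hfactor, div_mul_eq_div_div (q ^ 2), mul_div_assoc, mul_assoc]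

theorem sum_gosperTerm_shifted (h : MultiplicativelyIndependent s x) (hs : s ^ 2 = q) (ℓ n : ℕ) :
    ∑ k ∈ Finset.range (n + 1), gosperTerm (q ^ (-(3 * n : ℤ))) q s x (q ^ (2 - ℓ : ℤ) / x)
        (-(s * q ^ (1 - ℓ : ℤ))) k =
      gosperExtensionPrefactor ℓ q s x * ∑ i ∈ Finset.range (ℓ + 1),
        gosperExtensionCoeff ℓ q s x i *
          ((qpoch (q ^ (2 + i) * x) (q ^ 3) n * qpoch (q ^ (4 - i : ℤ) / x) (q ^ 3) n) /
            (qpoch (q ^ 2) (q ^ 3) n * qpoch (q ^ 4) (q ^ 3) n)) := by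
  have hq : q ≠ 0 := hs ▸ pow_ne_zero 2 h.left_ne_zero
  have hx := h.right_ne_zero
  have hy : q ^ (2 - ℓ : ℤ) / x = q ^ 2 / x / q ^ ℓ := by
    rw [zpow_sub₀ hq, zpow_natCast]; norm_cast; ring
  have hw : -(s * q ^ (1 - ℓ : ℤ)) = -(q * s) / q ^ ℓ := by
    rw [zpow_sub₀ hq, zpow_natCast, zpow_one]; ring
  have hqn : qpoch q q (3 * n + 1) ≠ 0 :=
    h.qpoch_ne_zero hs (m := 2) (n := 0) (.inl two_pos) (by simp [hs])
  simp only [hy, hw, gosperTerm_shifted_eq_sum h hs]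
  rw [← Finset.mul_sum, Finset.sum_comm]
  refine congrArg _ (Finset.sum_congr rfl fun i _ => ?_)
  rw [← Finset.mul_sum, sum_gosperTerm hs hq (mul_ne_zero hx (pow_ne_zero i hq)) hqn,
    show q ^ 2 * (x * q ^ i) = q ^ (2 + i) * x by ring,
    show q ^ 4 / (x * q ^ i) = q ^ (4 - i : ℤ) / x by
      rw [zpow_sub₀ hq, zpow_natCast]; norm_cast; field_simp]

@[fun_prop]
theorem continuousAt_qpoch {X : Type*} [TopologicalSpace X] {f g : X → ℂ} {p : X} {k : ℕ}
    (hf : ContinuousAt f p) (hg : ContinuousAt g p) :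
    ContinuousAt (fun p => qpoch (f p) (g p) k) p := by
  unfold qpoch
  fun_prop

theorem continuousAt_gosperTerm {n : ℕ} (hs0 : s ≠ 0) (hx : x ≠ 0)
    (hden : qpoch (s ^ 2) (s ^ 2) k * qpoch (-s ^ 2) (s ^ 2) k * qpoch (s ^ 2 * s) (s ^ 2) k *
      qpoch (-(s * (s ^ 2) ^ (1 - ℓ : ℤ))) (s ^ 2) k *
      qpoch ((s ^ 2) ^ (-(3 * n : ℤ)) / s ^ 2) (s ^ 2) k ≠ 0) :
    ContinuousAt (fun p : ℂ × ℂ => gosperTerm ((p.1 ^ 2) ^ (-(3 * n : ℤ))) (p.1 ^ 2) p.1 p.2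
        ((p.1 ^ 2) ^ (2 - ℓ : ℤ) / p.2) (-(p.1 * (p.1 ^ 2) ^ (1 - ℓ : ℤ))) k) (s, x) := by
  have hs2 : s ^ 2 ≠ 0 := pow_ne_zero 2 hs0
  unfold gosperTerm
  fun_prop (disch := first | assumption | exact Or.inl hs2)

theorem continuousAt_gosperExtensionPrefactor (hs0 : s ≠ 0)
    (hden : qpoch (x ^ 2 / s ^ 2) (s ^ 2) ℓ * qpoch (-(1 / s)) (s ^ 2) ℓ ≠ 0) :
    ContinuousAt (fun p : ℂ × ℂ => gosperExtensionPrefactor ℓ (p.1 ^ 2) p.1 p.2) (s, x) := by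
  have hs2 : s ^ 2 ≠ 0 := pow_ne_zero 2 hs0
  unfold gosperExtensionPrefactor
  fun_prop (disch := assumption)

theorem continuousAt_gosperExtensionCoeff (hs0 : s ≠ 0) (hx : 1 - x ^ 2 / (s ^ 2) ^ 2 ≠ 0)
    (hden : qpoch (s ^ 2) (s ^ 2) i * qpoch (x / s ^ 2) (s ^ 2) i *
      qpoch (x ^ 2 * (s ^ 2) ^ ((ℓ : ℤ) - 1)) (s ^ 2) i ≠ 0) :
    ContinuousAt (fun p : ℂ × ℂ => gosperExtensionCoeff ℓ (p.1 ^ 2) p.1 p.2 i) (s, x) := by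
  have hs2 : s ^ 2 ≠ 0 := pow_ne_zero 2 hs0
  have hsi : s ^ i ≠ 0 := pow_ne_zero i hs0
  have hs4 : (s ^ 2) ^ 2 ≠ 0 := pow_ne_zero 2 hs2
  unfold gosperExtensionCoeff
  fun_prop (disch := first | assumption | exact Or.inl hs2)
end Expansion

theorem q_gosper_second_extension (ℓ n : ℕ) (q x s : ℂ) (hs : s ^ 2 = q)
    (hq : q ≠ 0) (hx : x ≠ 0)
    (hden : ∀ k ≤ n,
      qpoch q q k * qpoch (-q) q k * qpoch (q*s) q k * qpoch (-(s * q ^ (1 - ℓ : ℤ))) q k *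
        qpoch (q ^ (-1 - 3*n : ℤ)) q k ≠ 0)
    (hdenℓ : qpoch (x^2 / q) q ℓ * qpoch (-(1/s)) q ℓ ≠ 0)
    (hdeni : ∀ i ≤ ℓ,
      qpoch q q i * qpoch (x/q) q i * qpoch (x^2 * q ^ ((ℓ : ℤ) - 1)) q i ≠ 0)
    (hx2 : 1 - x^2 / q^2 ≠ 0)
    (hden2 : qpoch (q^2) (q^3) n * qpoch (q^4) (q^3) n ≠ 0) :
    ∑ k ∈ Finset.range (n+1),
      qpoch (q ^ (-(3*n : ℤ))) (q^3) k *
        (qpoch x q k * qpoch (q ^ (2 - ℓ : ℤ) / x) q k) /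
        (qpoch q q k * qpoch (-q) q k * qpoch (q*s) q k * qpoch (-(s * q ^ (1 - ℓ : ℤ))) q k *
          qpoch (q ^ (-1 - 3*n : ℤ)) q k) * q^k
      = (qpoch (x/q) q ℓ * qpoch (-(x/s)) q ℓ) / (qpoch (x^2 / q) q ℓ * qpoch (-(1/s)) q ℓ) *
        ∑ i ∈ Finset.range (ℓ+1),
          (-1 : ℂ)^i * (q^(ℓ*i) / s^i) *
            ((1 - x^2 * q ^ (2*(i : ℤ) - 2)) / (1 - x^2 / q^2)) *
            (qpoch (q ^ (-(ℓ : ℤ))) q i * qpoch x q i * qpoch (x^2 / q^2) q i) /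
            (qpoch q q i * qpoch (x/q) q i * qpoch (x^2 * q ^ ((ℓ : ℤ) - 1)) q i) *
            ((qpoch (q^(2+i)*x) (q^3) n * qpoch (q ^ (4 - i : ℤ) / x) (q^3) n) /
              (qpoch (q^2) (q^3) n * qpoch (q^4) (q^3) n)) := by
  have hr : q ^ (-1 - 3 * n : ℤ) = q ^ (-(3 * n : ℤ)) / q := by
    rw [div_eq_mul_inv, ← zpow_sub_one₀ hq, neg_sub_comm]
  simp only [hr] at hden ⊢
  subst hs
  have hs0 : s ≠ 0 := by simpa using hq
  have hdense := mem_closure_iff_frequently.1 (dense_multiplicativelyIndependent (s, x))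
  have hgeneric := hdense.mono fun p hp => sum_gosperTerm_shifted hp rfl ℓ n
  refine tendsto_nhds_unique_of_frequently_eq ?_ ?_ hgeneric
  · exact tendsto_finsetSum _ fun k hk =>
      continuousAt_gosperTerm hs0 hx (hden k (Finset.mem_range_succ_iff.1 hk))
  · refine (continuousAt_gosperExtensionPrefactor hs0 hdenℓ).mul <|
      tendsto_finsetSum _ fun i hi => (continuousAt_gosperExtensionCoeff hs0 hx2
        (hdeni i (Finset.mem_range_succ_iff.1 hi))).mul ?_
    fun_prop (disch := first | assumption | exact Or.inl hq)
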